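/- arXiv:0801.2588 — 4 statements merged into one kernel-verified Lean document; each statement's English description precedes it below -/
import Mathlib

section
/- Let 0 < β ≤ 1 and 1/2 ≤ r < 1 be real numbers, and let B(β,r) = {(α₁,α₂) ∈ ℝ² : α₁ ≥ 0, α₂ ≥ 0, (1-β)·max([1-α₁]₊, [1-α₂]₊) + β·[1-α₁]₊ ≤ r}. Then the infimum of α₁ + α₂ over B(β,r) equals 2(1-r) if β < 1/2, and equals (1-r)/β if β ≥ 1/2. -/
open Set

/-! Since `1 - [1 - α]₊ = min α 1`, the outage condition reads
`1 - r ≤ (1 - β) * min u v + β * u` in the truncated coordinates `u = min α₁ 1`, `v = min α₂ 1`.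
Minimising `α₁ + α₂` is then a linear programme. If `β ≤ 1/2`, it pays to raise both coordinates
together, and the optimum is `(1 - r, 1 - r)`. If `β ≥ 1/2`, it pays to raise `u` alone, and the
optimum is `((1 - r) / β, 0)`, unless `(1 - r) / β > 1`; in that case `u` saturates at `1` and `v`
supplies the remainder. -/

/-- The outage region `B(β, r)` of the `m`-switch channel at multiplexing gain `r`, where
`β = m / M` is the switching fraction, as a set of exponent pairs `(α₁, α₂)`. The positive part
`[x]₊` is written `max x 0`. -/
def outageRegion (β r : ℝ) : Set (ℝ × ℝ) :=
  {p | 0 ≤ p.1 ∧ 0 ≤ p.2 ∧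
    (1 - β) * max (max (1 - p.1) 0) (max (1 - p.2) 0) + β * max (1 - p.1) 0 ≤ r}

namespace outageRegion

variable {β r a b : ℝ} {p : ℝ × ℝ}

theorem max_one_sub_zero (x : ℝ) : max (1 - x) 0 = 1 - min x 1 := by
  rw [← max_sub_sub_left, sub_self]

theorem mem_iff : p ∈ outageRegion β r ↔ 0 ≤ p.1 ∧ 0 ≤ p.2 ∧
    1 - r ≤ (1 - β) * min (min p.1 1) (min p.2 1) + β * min p.1 1 := by
  simp only [outageRegion, mem_ofPred_eq, max_one_sub_zero, max_sub_sub_left]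
  refine and_congr_right' (and_congr_right' ?_)
  constructor <;> intro h <;> linarith

theorem mk_mem_iff (hb : 0 ≤ b) (hba : b ≤ a) (ha : a ≤ 1) :
    (a, b) ∈ outageRegion β r ↔ 1 - r ≤ (1 - β) * b + β * a := by
  simp only [mem_iff, min_eq_left ha, min_eq_left (hba.trans ha), min_eq_right hba,
    hb, hb.trans hba, true_and]

theorem two_mul_one_sub_le_add (hβ : β ≤ 1 / 2) (hp : p ∈ outageRegion β r) :
    2 * (1 - r) ≤ p.1 + p.2 := by
  obtain ⟨-, -, h⟩ := mem_iff.1 hp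
  set u := min p.1 1
  set v := min p.2 1
  have hgap : 0 ≤ (1 - 2 * β) * (u - min u v) :=
    mul_nonneg (by linarith) (sub_nonneg.2 (min_le_left u v))
  calc 2 * (1 - r) ≤ 2 * ((1 - β) * min u v + β * u) := by linarith
    _ ≤ u + min u v := by linarith
    _ ≤ u + v := by gcongr; exact min_le_right u v
    _ ≤ p.1 + p.2 := add_le_add (min_le_left _ _) (min_le_left _ _)

theorem one_sub_le_mul_add (hβ : 1 / 2 ≤ β) (hp : p ∈ outageRegion β r) :
    1 - r ≤ β * (p.1 + p.2) := by
  obtain ⟨h₁, h₂, h⟩ := mem_iff.1 hp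
  set u := min p.1 1
  set v := min p.2 1
  have hmin : 0 ≤ min u v := le_min (le_min h₁ zero_le_one) (le_min h₂ zero_le_one)
  have hβ₀ : 0 ≤ β := by linarith
  calc 1 - r ≤ (1 - β) * min u v + β * u := h
    _ ≤ β * min u v + β * u := by
      linarith [mul_le_mul_of_nonneg_right (show 1 - β ≤ β by linarith) hmin]
    _ = β * (u + min u v) := by ring
    _ ≤ β * (p.1 + p.2) := mul_le_mul_of_nonneg_left
      (add_le_add (min_le_left _ _) ((min_le_right u v).trans (min_le_left _ _))) hβ₀

theorem two_mul_one_sub_sub_le_mul_add (hβ : 1 / 2 ≤ β) (hβ₁ : β ≤ 1)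
    (hp : p ∈ outageRegion β r) : 2 * (1 - β) - r ≤ (1 - β) * (p.1 + p.2) := by
  obtain ⟨-, -, h⟩ := mem_iff.1 hp
  set u := min p.1 1
  set v := min p.2 1
  have hβ' : 0 ≤ 1 - β := sub_nonneg.2 hβ₁
  have hsat : (2 * β - 1) * u ≤ 2 * β - 1 :=
    mul_le_of_le_one_right (by linarith) (min_le_right _ _)
  calc 2 * (1 - β) - r ≤ (1 - β) * min u v + β * u - (2 * β - 1) := by linarith
    _ ≤ (1 - β) * (u + min u v) := by linarith
    _ ≤ (1 - β) * (p.1 + p.2) := mul_le_mul_of_nonneg_left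
      (add_le_add (min_le_left _ _) ((min_le_right u v).trans (min_le_left _ _))) hβ'

theorem isLeast_add_of_le_half (hβ : β ≤ 1 / 2) (hr₀ : 0 ≤ r) (hr₁ : r ≤ 1) :
    IsLeast ((fun p : ℝ × ℝ => p.1 + p.2) '' outageRegion β r) (2 * (1 - r)) := by
  refine ⟨⟨(1 - r, 1 - r), ?_, (two_mul _).symm⟩,
    forall_mem_image.2 fun _ => two_mul_one_sub_le_add hβ⟩
  rw [mk_mem_iff (sub_nonneg.2 hr₁) le_rfl (sub_le_self 1 hr₀)]
  linarith

theorem isLeast_add_of_one_sub_le (hβ : 1 / 2 ≤ β) (hβr : 1 - r ≤ β) (hr₁ : r ≤ 1) :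
    IsLeast ((fun p : ℝ × ℝ => p.1 + p.2) '' outageRegion β r) ((1 - r) / β) := by
  have hβ₀ : 0 < β := by linarith
  refine ⟨⟨((1 - r) / β, 0), ?_, add_zero _⟩,
    forall_mem_image.2 fun _ hp => (div_le_iff₀' hβ₀).2 (one_sub_le_mul_add hβ hp)⟩
  rw [mk_mem_iff le_rfl (div_nonneg (sub_nonneg.2 hr₁) hβ₀.le) ((div_le_one hβ₀).2 hβr),
    mul_zero, zero_add, mul_div_cancel₀ _ hβ₀.ne']

theorem isLeast_add_of_le_one_sub (hβ : 1 / 2 ≤ β) (hβ₁ : β < 1) (hβr : β ≤ 1 - r)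
    (hr₀ : 0 ≤ r) :
    IsLeast ((fun p : ℝ × ℝ => p.1 + p.2) '' outageRegion β r) (2 - r / (1 - β)) := by
  have hβ' : 0 < 1 - β := sub_pos.2 hβ₁
  have hcancel : (1 - β) * (r / (1 - β)) = r := mul_div_cancel₀ r hβ'.ne'
  have hfrac : r / (1 - β) ≤ 1 := (div_le_one hβ').2 (by linarith)
  refine ⟨⟨(1, 1 - r / (1 - β)), ?_, by ring⟩, forall_mem_image.2 fun p hp => ?_⟩
  · rw [mk_mem_iff (sub_nonneg.2 hfrac) (sub_le_self 1 (div_nonneg hr₀ hβ'.le)) le_rfl]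
    linarith
  · refine le_of_mul_le_mul_left ?_ hβ'
    calc (1 - β) * (2 - r / (1 - β)) = 2 * (1 - β) - r := by linarith
      _ ≤ (1 - β) * (p.1 + p.2) := two_mul_one_sub_sub_le_mul_add hβ hβ₁.le hp

end outageRegion

theorem stmt0_general {β r : ℝ} (hr₀ : 0 ≤ r) (hr₁ : r ≤ 1) :
    (β ≤ 1 / 2 →
      IsLeast ((fun p : ℝ × ℝ => p.1 + p.2) '' outageRegion β r) (2 * (1 - r))) ∧
    (1 / 2 ≤ β → 1 - r ≤ β →
      IsLeast ((fun p : ℝ × ℝ => p.1 + p.2) '' outageRegion β r) ((1 - r) / β)) ∧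
    (1 / 2 ≤ β → β < 1 - r →
      IsLeast ((fun p : ℝ × ℝ => p.1 + p.2) '' outageRegion β r) (2 - r / (1 - β))) :=
  ⟨fun hβ => outageRegion.isLeast_add_of_le_half hβ hr₀ hr₁,
    fun hβ hβr => outageRegion.isLeast_add_of_one_sub_le hβ hβr hr₁,
    fun hβ hβr => outageRegion.isLeast_add_of_le_one_sub hβ (by linarith) hβr.le hr₀⟩

/-- For `0 < β ≤ 1` and `1/2 ≤ r < 1`, the infimum of `α₁ + α₂` over the outage region
`B(β,r) = {(α₁,α₂) : α₁ ≥ 0, α₂ ≥ 0, (1-β)·max([1-α₁]₊,[1-α₂]₊) + β·[1-α₁]₊ ≤ r}`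
equals `2(1-r)` if `β < 1/2` and `(1-r)/β` if `β ≥ 1/2`. -/
theorem stmt0 (β r : ℝ) (hβ : 0 < β) (hβ1 : β ≤ 1) (hr : 1/2 ≤ r) (hr1 : r < 1)
    (B : Set (ℝ × ℝ))
    (hB : B = {p : ℝ × ℝ | 0 ≤ p.1 ∧ 0 ≤ p.2 ∧
      (1 - β) * max (max (1 - p.1) 0) (max (1 - p.2) 0) + β * max (1 - p.1) 0 ≤ r}) :
    (β < 1/2 → sInf ((fun p : ℝ × ℝ => p.1 + p.2) '' B) = 2 * (1 - r)) ∧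
    (1/2 ≤ β → sInf ((fun p : ℝ × ℝ => p.1 + p.2) '' B) = (1 - r) / β) := by
  obtain ⟨hlow, hhigh, -⟩ := stmt0_general (β := β) (by linarith) hr1.le
  subst hB
  exact ⟨fun h => (hlow h.le).csInf_eq, fun h => (hhigh h (by linarith)).csInf_eq⟩
end

section
/- Let μ be the exponential distribution with rate 1 on the real line. Fix integers M ≥ m ≥ 2 and a real number r with 0 < r ≤ (m-1)/M. Then lim_{ρ→∞} log μ( (ρ^{Mr/m - 1}, ρ^{Mr/(m-1) - 1}) ) / log ρ = Mr/(m-1) - 1. -/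
open Real Filter MeasureTheory ProbabilityTheory

/-
An interval `(x, y)` with `0 ≤ x ≤ y` and `y` bounded has exponential mass comparable to its length,
and for `a < b` the length `ρ ^ b - ρ ^ a` is asymptotic to `ρ ^ b`; when `b ≤ 0` the interval
`(ρ ^ a, ρ ^ b)` stays in `(0, 1]`, so its mass is `Θ(ρ ^ b)`. Taking logarithms turns the constants
of `Θ` into a bounded additive error, which division by `log ρ` removes.
-/

section

open Asymptotics Set Topology

lemma isBigO_log_sub_log_of_isTheta {α : Type*} {l : Filter α} {f g : α → ℝ}
    (hg : ∀ᶠ t in l, g t ≠ 0) (h : f =Θ[l] g) :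
    (fun t => log (f t) - log (g t)) =O[l] (fun _ => (1 : ℝ)) := by
  have exp_log_eventuallyEq {k : α → ℝ} (hk : ∀ᶠ t in l, k t ≠ 0) :
      (fun t => rexp (log (k t))) =ᶠ[l] fun t => ‖k t‖ :=
    hk.mono fun _ ht => exp_log_eq_abs ht
  have hf : ∀ᶠ t in l, f t ≠ 0 := by
    filter_upwards [hg, h.eq_zero_iff] with t hgt hfg using mt hfg.1 hgt
  have h_exp : (fun t => rexp (log (f t))) =Θ[l] fun t => rexp (log (g t)) :=
    ((exp_log_eventuallyEq hf).trans_isTheta h.norm_left.norm_right).trans_eventuallyEq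
      (exp_log_eventuallyEq hg).symm
  exact isBigO_one_iff ℝ |>.2 (isTheta_exp_comp_exp_comp.1 h_exp)

lemma tendsto_log_div_log_of_isTheta_rpow {f : ℝ → ℝ} {b : ℝ}
    (h : f =Θ[atTop] fun ρ => ρ ^ b) :
    Tendsto (fun ρ => log (f ρ) / log ρ) atTop (𝓝 b) := by
  have h_ne : ∀ᶠ ρ : ℝ in atTop, ρ ^ b ≠ 0 := by
    filter_upwards [eventually_gt_atTop 0] with ρ hρ using (rpow_pos_of_pos hρ b).ne'
  have h_error : Tendsto (fun ρ => (log (f ρ) - log (ρ ^ b)) / log ρ) atTop (𝓝 0) :=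
    ((isBigO_log_sub_log_of_isTheta h_ne h).trans_isLittleO
      isLittleO_const_log_atTop).tendsto_div_nhds_zero
  refine (zero_add b ▸ h_error.add_const b).congr' ?_
  filter_upwards [eventually_gt_atTop 1] with ρ hρ
  have hlog : log ρ ≠ 0 := (log_pos hρ).ne'
  rw [log_rpow (zero_lt_one.trans hρ)]
  field_simp
  ring

lemma isLittleO_rpow_rpow_atTop_of_lt {a b : ℝ} (hab : a < b) :
    (fun ρ : ℝ => ρ ^ a) =o[atTop] fun ρ => ρ ^ b := by
  have h_ratio : Tendsto (fun ρ : ℝ => ρ ^ (-(b - a))) atTop (𝓝 0) :=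
    tendsto_rpow_neg_atTop (sub_pos.2 hab)
  refine isLittleO_of_tendsto' ?_ (h_ratio.congr' ?_)
  · filter_upwards [eventually_gt_atTop 0] with ρ hρ h_zero
    exact absurd h_zero (rpow_pos_of_pos hρ b).ne'
  · filter_upwards [eventually_gt_atTop 0] with ρ hρ
    rw [neg_sub, rpow_sub hρ]

lemma exp_sub_exp_le_exp_mul_sub (u v : ℝ) : rexp u - rexp v ≤ rexp u * (u - v) := by
  have h_factor : rexp v = rexp u * rexp (v - u) := by rw [← Real.exp_add, add_sub_cancel]
  have h_tangent := mul_le_mul_of_nonneg_left (add_one_le_exp (v - u)) (exp_pos u).le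
  linarith

lemma abs_exp_sub_exp_mem_Icc {B u v : ℝ} (hu : |u| ≤ B) (hv : |v| ≤ B) :
    |rexp u - rexp v| ∈ Icc (rexp (-B) * |u - v|) (rexp B * |u - v|) := by
  wlog huv : v ≤ u generalizing u v
  · rw [abs_sub_comm (rexp u), abs_sub_comm u]
    exact this hv hu (le_of_not_ge huv)
  have h_sub : 0 ≤ u - v := sub_nonneg.2 huv
  rw [abs_of_nonneg h_sub, abs_of_nonneg (sub_nonneg.2 (exp_le_exp.2 huv))]
  constructor
  · calc rexp (-B) * (u - v) ≤ rexp v * (u - v) := by gcongr; exact (abs_le.1 hv).1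
      _ ≤ rexp u - rexp v := by linarith [exp_sub_exp_le_exp_mul_sub v u]
  · calc rexp u - rexp v ≤ rexp u * (u - v) := exp_sub_exp_le_exp_mul_sub u v
      _ ≤ rexp B * (u - v) := by gcongr; exact (abs_le.1 hu).2

lemma isTheta_exp_sub_exp {α : Type*} {l : Filter α} {u v : α → ℝ}
    (hu : IsBoundedUnder (· ≤ ·) l fun t => |u t|)
    (hv : IsBoundedUnder (· ≤ ·) l fun t => |v t|) :
    (fun t => rexp (u t) - rexp (v t)) =Θ[l] fun t => u t - v t := by
  obtain ⟨B, hB⟩ := hu.sup hv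
  have h_mem : ∀ᶠ t in l, |rexp (u t) - rexp (v t)| ∈
      Icc (rexp (-B) * |u t - v t|) (rexp B * |u t - v t|) := by
    filter_upwards [eventually_map.1 hB] with t ht
    exact abs_exp_sub_exp_mem_Icc (le_sup_left.trans ht) (le_sup_right.trans ht)
  refine ⟨.of_bound (rexp B) (h_mem.mono fun _ ht => ht.2),
    .of_bound (rexp B) (h_mem.mono fun t ht => ?_)⟩
  rw [norm_eq_abs, norm_eq_abs, ← inv_mul_le_iff₀ (exp_pos B), ← Real.exp_neg]
  exact ht.1

lemma measureReal_Ioo_eq_cdf_sub_cdf (μ : Measure ℝ) [IsProbabilityMeasure μ]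
    [NullSingletonClass μ] {x y : ℝ} (hxy : x ≤ y) : μ.real (Ioo x y) = cdf μ y - cdf μ x := by
  rw [measureReal_congr Ioo_ae_eq_Ioc, ← Iic_sdiff_Iic,
    measureReal_sdiff (Iic_subset_Iic.2 hxy) measurableSet_Iic, cdf_eq_real, cdf_eq_real]

variable {θ : ℝ}

lemma expMeasure_real_Ioo (hθ : 0 < θ) {x y : ℝ} (hx : 0 ≤ x) (hxy : x ≤ y) :
    (expMeasure θ).real (Ioo x y) = rexp (-(θ * x)) - rexp (-(θ * y)) := by
  have : IsProbabilityMeasure (expMeasure θ) := isProbabilityMeasure_expMeasure hθ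
  have : NullSingletonClass (expMeasure θ) := by
    unfold expMeasure gammaMeasure
    infer_instance
  rw [measureReal_Ioo_eq_cdf_sub_cdf _ hxy, cdf_expMeasure_eq hθ, cdf_expMeasure_eq hθ,
    if_pos hx, if_pos (hx.trans hxy), sub_sub_sub_cancel_left]

lemma isTheta_expMeasure_real_Ioo (hθ : 0 < θ) {α : Type*} {l : Filter α} {x y : α → ℝ}
    (hx : ∀ᶠ t in l, 0 ≤ x t) (hxy : ∀ᶠ t in l, x t ≤ y t) (hy : IsBoundedUnder (· ≤ ·) l y) :
    (fun t => (expMeasure θ).real (Ioo (x t) (y t))) =Θ[l] fun t => y t - x t := by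
  have isBoundedUnder_abs {z : α → ℝ} (hz : ∀ᶠ t in l, 0 ≤ z t ∧ z t ≤ y t) :
      IsBoundedUnder (· ≤ ·) l fun t => |-(θ * z t)| := by
    obtain ⟨B, hB⟩ := hy
    refine isBoundedUnder_of_eventually_le (a := θ * B) ?_
    filter_upwards [hz, eventually_map.1 hB] with t ⟨hz_nonneg, hzy⟩ hyB
    rw [abs_neg, abs_of_nonneg (by positivity)]
    exact mul_le_mul_of_nonneg_left (hzy.trans hyB) hθ.le
  have h_mass : (fun t => (expMeasure θ).real (Ioo (x t) (y t))) =ᶠ[l]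
      fun t => rexp (-(θ * x t)) - rexp (-(θ * y t)) := by
    filter_upwards [hx, hxy] with t using expMeasure_real_Ioo hθ
  have h_exp := isTheta_exp_sub_exp (isBoundedUnder_abs (hx.and hxy))
    (isBoundedUnder_abs ((hx.and hxy).mono fun _ h => ⟨h.1.trans h.2, le_rfl⟩))
  have h_length : (fun t => -(θ * x t) - -(θ * y t)) = fun t => θ * (y t - x t) := by
    funext t
    ring
  rw [h_length, isTheta_const_mul_right hθ.ne'] at h_exp
  exact h_mass.trans_isTheta h_exp

lemma div_sub_one_lt_and_nonpos {c m : ℝ} (hc : 0 < c) (hcm : c ≤ m - 1) :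
    c / m - 1 < c / (m - 1) - 1 ∧ c / (m - 1) - 1 ≤ 0 := by
  have hm : 0 < m - 1 := hc.trans_le hcm
  exact ⟨sub_lt_sub_right (div_lt_div_of_pos_left hc hm (sub_one_lt m)) 1,
    sub_nonpos.2 (div_le_one_of_le₀ hcm hm.le)⟩

theorem stmt5_general (hθ : 0 < θ) {a b : ℝ} (hab : a < b) (hb : b ≤ 0) :
    Tendsto (fun ρ : ℝ => log ((expMeasure θ).real (Ioo (ρ ^ a) (ρ ^ b))) / log ρ)
      atTop (𝓝 b) := by
  have h_nonneg : ∀ᶠ ρ : ℝ in atTop, 0 ≤ ρ ^ a := by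
    filter_upwards [eventually_ge_atTop 0] with ρ hρ using rpow_nonneg hρ a
  have h_le : ∀ᶠ ρ : ℝ in atTop, ρ ^ a ≤ ρ ^ b := by
    filter_upwards [eventually_ge_atTop 1] with ρ hρ using rpow_le_rpow_of_exponent_le hρ hab.le
  have h_bdd : IsBoundedUnder (· ≤ ·) atTop fun ρ : ℝ => ρ ^ b := by
    refine isBoundedUnder_of_eventually_le (a := 1) ?_
    filter_upwards [eventually_ge_atTop 1] with ρ hρ using rpow_le_one_of_one_le_of_nonpos hρ hb
  have h_length : (fun ρ : ℝ => ρ ^ b - ρ ^ a) =Θ[atTop] fun ρ => ρ ^ b :=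
    (IsEquivalent.refl.sub_isLittleO (isLittleO_rpow_rpow_atTop_of_lt hab)).isTheta
  exact tendsto_log_div_log_of_isTheta_rpow
    ((isTheta_expMeasure_real_Ioo hθ h_nonneg h_le h_bdd).trans h_length)

end

/-- For the unit-rate exponential distribution `μ`, integers `M ≥ m ≥ 2` and
`0 < r ≤ (m-1)/M`, the probability `μ((ρ^{Mr/m - 1}, ρ^{Mr/(m-1) - 1}))` that the relay
decodes after exactly `m` slots has SNR exponent `1 - Mr/(m-1)`:
`lim_{ρ→∞} log μ((ρ^{Mr/m - 1}, ρ^{Mr/(m-1) - 1})) / log ρ = Mr/(m-1) - 1`. -/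
theorem stmt5 (M m : ℤ) (hm : 2 ≤ m) (hM : m ≤ M) (r : ℝ) (hr : 0 < r)
    (hr' : r ≤ ((m : ℝ) - 1) / M) :
    Filter.Tendsto
      (fun ρ : ℝ =>
        Real.log ((ProbabilityTheory.expMeasure 1
          (Set.Ioo (ρ ^ ((M : ℝ) * r / m - 1)) (ρ ^ ((M : ℝ) * r / ((m : ℝ) - 1) - 1)))).toReal)
          / Real.log ρ)
      Filter.atTop (nhds ((M : ℝ) * r / ((m : ℝ) - 1) - 1)) := by
  have hM_pos : (0 : ℝ) < M := by exact_mod_cast (by lia : 0 < M)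
  obtain ⟨hab, hb⟩ := div_sub_one_lt_and_nonpos (mul_pos hM_pos hr) ((le_div_iff₀' hM_pos).1 hr')
  exact stmt5_general one_pos hab hb
end

section
/- Let M ≥ m ≥ 1 be integers, T ≥ 1 a real number, and 0 < r < 1 a real number. Define g(α₁,α₂) = (M-m)·max([1-α₁]₊, [1-α₂]₊) + m·[1-α₁]₊ - rM. Then inf { α₁ + α₂ + T·g(α₁,α₂) : α₁ ≥ 0, α₂ ≥ 0, g(α₁,α₂) > 0 } = inf { α₁ + α₂ : α₁ ≥ 0, α₂ ≥ 0, g(α₁,α₂) ≤ 0 }. -/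
open Set

/-!
Since `T` times every nonzero slope of the gap `g` is at least `1`, the map
`α ↦ α₁ + α₂ + T g(α)` does not increase when `α₁` grows up to `1`, nor when `α₂` then grows up to
`1`. As `g(1, 1) ≤ 0`, from any no-outage point this path meets `{g = 0}` without increasing the
objective, so `T g` is an exact penalty. Conversely, the segment from `0` to an outage point `α`
meets the frontier of `{g > 0}`, where `g = 0`; the sum there is at most `α₁ + α₂` and it is a limit
of penalized sums over no-outage points.
-/

/-- The gap to outage of the `m`-switch channel at multiplexing gain `r`, as a function of the
exponents `α₁, α₂` of the squared channel gains `ρ ^ (-α₁)` and `ρ ^ (-α₂)`. The parameters `M` and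
`m` are allowed to be real. -/
def outageGap (M m r α₁ α₂ : ℝ) : ℝ :=
  (M - m) * max (max (1 - α₁) 0) (max (1 - α₂) 0) + m * max (1 - α₁) 0 - r * M

/-- The exponent of the no-outage error probability of the GLRT decoder with slot length `T`, for a
channel with gap to outage `g`. -/
noncomputable def glrtExponent (T : ℝ) (g : ℝ → ℝ → ℝ) : ℝ :=
  sInf {x : ℝ | ∃ α₁ α₂ : ℝ, 0 ≤ α₁ ∧ 0 ≤ α₂ ∧ 0 < g α₁ α₂ ∧ x = α₁ + α₂ + T * g α₁ α₂}

/-- The outage exponent of a channel with gap to outage `g`. -/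
noncomputable def outageExponent (g : ℝ → ℝ → ℝ) : ℝ :=
  sInf {x : ℝ | ∃ α₁ α₂ : ℝ, 0 ≤ α₁ ∧ 0 ≤ α₂ ∧ g α₁ α₂ ≤ 0 ∧ x = α₁ + α₂}

lemma exists_mem_Ioc_eq_mem_closure_lt {X Y : Type*} [ConditionallyCompleteLinearOrder X]
    [TopologicalSpace X] [OrderTopology X] [DenselyOrdered X] [LinearOrder Y] [TopologicalSpace Y]
    [OrderClosedTopology Y] {h : X → Y} (hh : Continuous h) {a b : X} {c : Y} (hab : a ≤ b)
    (ha : c < h a) (hb : h b ≤ c) :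
    ∃ t ∈ Ioc a b, h t = c ∧ t ∈ closure (Ioi a ∩ {s | c < h s}) := by
  have hnot : ¬ closure {s | c < h s} ∩ Icc a b ⊆ {s | c < h s} := fun hsub ↦
    hb.not_gt <| isPreconnected_Icc.subset_of_closure_inter_subset (isOpen_lt continuous_const hh)
      ⟨a, left_mem_Icc.2 hab, ha⟩ hsub (right_mem_Icc.2 hab)
  obtain ⟨t, ⟨htcl, hat, htb⟩, hle⟩ := not_subset.1 hnot
  have htc : h t = c := le_antisymm (not_lt.1 hle) (closure_lt_subset_le continuous_const hh htcl)
  have hat' : a < t := hat.lt_of_ne (by rintro rfl; exact ha.ne' htc)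
  exact ⟨t, ⟨hat', htb⟩, htc, isOpen_Ioi.inter_closure ⟨hat', htcl⟩⟩

lemma exists_mem_Icc_eq_zero_le_add_mul {h : ℝ → ℝ} {T a b : ℝ} (hab : a ≤ b)
    (hh : ContinuousOn h (Icc a b)) (ha : 0 ≤ h a) (hb : h b ≤ 0)
    (hanti : AntitoneOn (fun t ↦ t + T * h t) (Icc a b)) :
    ∃ t ∈ Icc a b, h t = 0 ∧ t ≤ a + T * h a := by
  obtain ⟨t, ht, ht0⟩ := intermediate_value_Icc' hab hh ⟨hb, ha⟩
  refine ⟨t, ht, ht0, ?_⟩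
  simpa [ht0] using hanti (left_mem_Icc.2 hab) ht ht.1

section Exponents

variable {T : ℝ} {g : ℝ → ℝ → ℝ}

lemma glrtExponent_le (hT : 0 ≤ T) {x : ℝ}
    (hx : x ∈ closure {x : ℝ | ∃ α₁ α₂ : ℝ, 0 ≤ α₁ ∧ 0 ≤ α₂ ∧ 0 < g α₁ α₂ ∧
      x = α₁ + α₂ + T * g α₁ α₂}) :
    glrtExponent T g ≤ x := by
  suffices hlb : glrtExponent T g ∈ lowerBounds (closure _) from hlb hx
  rw [lowerBounds_closure]
  refine fun y hy ↦ csInf_le ⟨0, ?_⟩ hy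
  rintro _ ⟨α₁, α₂, h₁, h₂, hpos, rfl⟩
  positivity

lemma outageExponent_le {α₁ α₂ : ℝ} (h₁ : 0 ≤ α₁) (h₂ : 0 ≤ α₂) (hout : g α₁ α₂ ≤ 0) :
    outageExponent g ≤ α₁ + α₂ := by
  refine csInf_le ⟨0, ?_⟩ ⟨α₁, α₂, h₁, h₂, hout, rfl⟩
  rintro _ ⟨β₁, β₂, h₁, h₂, -, rfl⟩
  positivity

lemma glrtExponent_le_add_of_outage (hT : 0 ≤ T) (hg : Continuous g.uncurry) (h0 : 0 < g 0 0)
    {α₁ α₂ : ℝ} (h₁ : 0 ≤ α₁) (h₂ : 0 ≤ α₂) (hout : g α₁ α₂ ≤ 0) :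
    glrtExponent T g ≤ α₁ + α₂ := by
  have hray : Continuous fun t : ℝ ↦ g (t * α₁) (t * α₂) :=
    hg.comp (f := fun t : ℝ ↦ (t * α₁, t * α₂)) (by fun_prop)
  obtain ⟨t, ⟨-, ht1⟩, ht0, htcl⟩ :=
    exists_mem_Ioc_eq_mem_closure_lt hray zero_le_one (by simpa using h0) (by simpa using hout)
  let obj (s : ℝ) : ℝ := s * α₁ + s * α₂ + T * g (s * α₁) (s * α₂)
  have hobj : Continuous obj := by fun_prop
  calc glrtExponent T g
      ≤ obj t := by
        refine glrtExponent_le hT (map_mem_closure hobj htcl ?_)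
        rintro s ⟨hs, hpos⟩
        exact ⟨s * α₁, s * α₂, mul_nonneg hs.le h₁, mul_nonneg hs.le h₂, hpos, rfl⟩
    _ = t * α₁ + t * α₂ := by simp only [obj, ht0, mul_zero, add_zero]
    _ ≤ α₁ + α₂ := add_le_add (mul_le_of_le_one_left h₁ ht1) (mul_le_of_le_one_left h₂ ht1)

end Exponents

section OutageGap

variable {M m r T : ℝ}

lemma continuous_uncurry_outageGap : Continuous (outageGap M m r).uncurry := by
  unfold Function.uncurry outageGap
  fun_prop

lemma outageGap_zero_zero : outageGap M m r 0 0 = (1 - r) * M := by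
  norm_num [outageGap]
  ring

lemma outageGap_of_one_le_left {α₁ : ℝ} (h₁ : 1 ≤ α₁) (α₂ : ℝ) :
    outageGap M m r α₁ α₂ = (M - m) * max (1 - α₂) 0 - r * M := by
  simp [outageGap, max_eq_right (sub_nonpos.2 h₁)]

lemma antitoneOn_add_mul_outageGap_left (hT : 0 ≤ T) (hm : 1 ≤ T * m) (hmM : m ≤ M) (α₂ : ℝ) :
    AntitoneOn (fun α₁ ↦ α₁ + T * outageGap M m r α₁ α₂) (Iic 1) := by
  intro s hs t ht hst
  have hslope : t - s ≤ T * m * (t - s) := le_mul_of_one_le_left (sub_nonneg.2 hst) hm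
  have hmax : T * ((M - m) * max (1 - t) (max (1 - α₂) 0)) ≤
      T * ((M - m) * max (1 - s) (max (1 - α₂) 0)) := by
    have := sub_nonneg.2 hmM
    gcongr
  simp only [outageGap, max_eq_left (sub_nonneg.2 (mem_Iic.1 hs)),
    max_eq_left (sub_nonneg.2 (mem_Iic.1 ht))]
  linarith

lemma antitoneOn_add_mul_outageGap_right (hM : 1 ≤ T * (M - m)) {α₁ : ℝ} (h₁ : 1 ≤ α₁) :
    AntitoneOn (fun α₂ ↦ α₂ + T * outageGap M m r α₁ α₂) (Iic 1) := by
  intro s hs t ht hst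
  have hslope : t - s ≤ T * (M - m) * (t - s) := le_mul_of_one_le_left (sub_nonneg.2 hst) hM
  simp only [outageGap_of_one_le_left h₁, max_eq_left (sub_nonneg.2 (mem_Iic.1 hs)),
    max_eq_left (sub_nonneg.2 (mem_Iic.1 ht))]
  linarith

lemma exists_outage_right_le_of_one_le_left (hM : m = M ∨ 1 ≤ T * (M - m)) (hrM : 0 ≤ r * M)
    {α₁ α₂ : ℝ} (h₁ : 1 ≤ α₁) (hpos : 0 < outageGap M m r α₁ α₂) :
    ∃ β₂ ≥ α₂, outageGap M m r α₁ β₂ ≤ 0 ∧ β₂ ≤ α₂ + T * outageGap M m r α₁ α₂ := by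
  have hgap : r * M < (M - m) * max (1 - α₂) 0 := by
    rwa [outageGap_of_one_le_left h₁, sub_pos] at hpos
  have hne : m ≠ M := by
    rintro rfl
    simp only [sub_self, zero_mul] at hgap
    exact hgap.not_ge hrM
  have h₂ : α₂ ≤ 1 := by
    by_contra! hlt
    rw [max_eq_right (sub_nonpos.2 hlt.le), mul_zero] at hgap
    exact hgap.not_ge hrM
  have hout : outageGap M m r α₁ 1 ≤ 0 := by simpa [outageGap_of_one_le_left h₁] using hrM
  obtain ⟨β₂, hβ₂, hzero, hle⟩ := exists_mem_Icc_eq_zero_le_add_mul h₂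
    (continuous_uncurry_outageGap.uncurry_left α₁).continuousOn hpos.le hout
    ((antitoneOn_add_mul_outageGap_right (hM.resolve_left hne) h₁).mono Icc_subset_Iic_self)
  exact ⟨β₂, hβ₂.1, hzero.le, hle⟩

lemma exists_outage_add_le (hT : 0 ≤ T) (hm : 1 ≤ T * m) (hM : m = M ∨ 1 ≤ T * (M - m))
    (hmM : m ≤ M) (hrM : 0 ≤ r * M) {α₁ α₂ : ℝ} (hpos : 0 < outageGap M m r α₁ α₂) :
    ∃ β₁ ≥ α₁, ∃ β₂ ≥ α₂, outageGap M m r β₁ β₂ ≤ 0 ∧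
      β₁ + β₂ ≤ α₁ + α₂ + T * outageGap M m r α₁ α₂ := by
  rcases le_total 1 α₁ with h₁ | h₁
  · obtain ⟨β₂, hβ₂, hout, hle⟩ := exists_outage_right_le_of_one_le_left hM hrM h₁ hpos
    exact ⟨α₁, le_rfl, β₂, hβ₂, hout, by linarith⟩
  have hanti := antitoneOn_add_mul_outageGap_left (r := r) hT hm hmM α₂
  rcases le_or_gt (outageGap M m r 1 α₂) 0 with hout | hpos₁
  · obtain ⟨β₁, hβ₁, hzero, hle⟩ := exists_mem_Icc_eq_zero_le_add_mul h₁
      (continuous_uncurry_outageGap.uncurry_right α₂).continuousOn hpos.le hout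
      (hanti.mono Icc_subset_Iic_self)
    exact ⟨β₁, hβ₁.1, α₂, le_rfl, hzero.le, by linarith⟩
  · obtain ⟨β₂, hβ₂, hout, hle⟩ := exists_outage_right_le_of_one_le_left hM hrM le_rfl hpos₁
    have hstep : 1 + T * outageGap M m r 1 α₂ ≤ α₁ + T * outageGap M m r α₁ α₂ :=
      hanti h₁ self_mem_Iic h₁
    exact ⟨1, h₁, β₂, hβ₂, hout, by linarith⟩

end OutageGap

theorem stmt10_general {M m r T : ℝ} (hT : 0 ≤ T) (hm : 1 ≤ T * m)
    (hM : m = M ∨ 1 ≤ T * (M - m)) (hr0 : 0 ≤ r) (hr1 : r < 1) :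
    glrtExponent T (outageGap M m r) = outageExponent (outageGap M m r) := by
  have hm0 : 0 < m := pos_of_mul_pos_right (zero_lt_one.trans_le hm) hT
  have hmM : m ≤ M :=
    hM.elim le_of_eq fun h ↦ sub_nonneg.1 (pos_of_mul_pos_right (zero_lt_one.trans_le h) hT).le
  have hM0 : 0 < M := hm0.trans_le hmM
  have hrM : 0 ≤ r * M := mul_nonneg hr0 hM0.le
  have hpos : 0 < outageGap M m r 0 0 := by
    rw [outageGap_zero_zero]
    exact mul_pos (sub_pos.2 hr1) hM0
  have hout : outageGap M m r 1 1 ≤ 0 := by simpa [outageGap_of_one_le_left le_rfl] using hrM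
  apply le_antisymm
  · refine le_csInf ⟨1 + 1, 1, 1, zero_le_one, zero_le_one, hout, rfl⟩ ?_
    rintro _ ⟨α₁, α₂, h₁, h₂, hα, rfl⟩
    exact glrtExponent_le_add_of_outage hT continuous_uncurry_outageGap hpos h₁ h₂ hα
  · refine le_csInf ⟨_, 0, 0, le_rfl, le_rfl, hpos, rfl⟩ ?_
    rintro _ ⟨α₁, α₂, h₁, h₂, hα, rfl⟩
    obtain ⟨β₁, hβ₁, β₂, hβ₂, hβ, hle⟩ := exists_outage_add_le hT hm hM hmM hrM hα
    exact (outageExponent_le (h₁.trans hβ₁) (h₂.trans hβ₂) hβ).trans hle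

/-- The Varadhan exponent of the GLRT no-outage error probability equals the outage
exponent: with `g(α₁,α₂) = (M-m)·max([1-α₁]₊,[1-α₂]₊) + m·[1-α₁]₊ - rM`,
`inf {α₁+α₂+T·g(α₁,α₂) : α₁,α₂ ≥ 0, g(α₁,α₂) > 0} = inf {α₁+α₂ : α₁,α₂ ≥ 0, g(α₁,α₂) ≤ 0}`. -/
theorem stmt10 (M m : ℤ) (hm : 1 ≤ m) (hM : m ≤ M) (T : ℝ) (hT : 1 ≤ T)
    (r : ℝ) (hr0 : 0 < r) (hr1 : r < 1)
    (g : ℝ → ℝ → ℝ)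
    (hg : ∀ α₁ α₂ : ℝ, g α₁ α₂ =
      ((M : ℝ) - m) * max (max (1 - α₁) 0) (max (1 - α₂) 0)
        + (m : ℝ) * max (1 - α₁) 0 - r * M) :
    sInf {x : ℝ | ∃ α₁ α₂ : ℝ, 0 ≤ α₁ ∧ 0 ≤ α₂ ∧ 0 < g α₁ α₂ ∧
        x = α₁ + α₂ + T * g α₁ α₂} =
      sInf {x : ℝ | ∃ α₁ α₂ : ℝ, 0 ≤ α₁ ∧ 0 ≤ α₂ ∧ g α₁ α₂ ≤ 0 ∧ x = α₁ + α₂} := by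
  obtain rfl : g = outageGap M m r := funext₂ hg
  exact stmt10_general (zero_le_one.trans hT) (one_le_mul_of_one_le_of_one_le hT (mod_cast hm))
    (hM.eq_or_lt.imp (mod_cast ·) fun h ↦ one_le_mul_of_one_le_of_one_le hT
      (le_sub_iff_add_le'.2 (mod_cast h))) hr0.le hr1
end

section
/- Let c > 0 and let f : [0,c] → ℝ be continuous. Then lim_{ρ→∞} log( ∫₀^c ρ^{-f(ν)} dν ) / log ρ = -inf_{ν ∈ [0,c]} f(ν). -/
open Real Filter MeasureTheory Set

/-!
For a measure `μ` and an exponent `f` with essential infimum `m`, the integral `∫ ρ ^ (-f) ∂μ` has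
polynomial order exactly `-m`. If `a < m`, then `f ≥ a` almost everywhere and comparing `ρ ^ (-f)`
with `ρ₀ ^ (-f)`, for a fixed `ρ₀` at which the integral converges, gives the upper bound
`O(ρ ^ (-a))`. If `a > m`, then `{f ≤ a}` has positive measure and Markov's inequality bounds the
integral below by `μ {f ≤ a} * ρ ^ (-a)`. On a compact set that is the closure of its interior the
essential infimum of a continuous function is its infimum, because a closed condition which holds
almost everywhere holds on a dense subset, hence everywhere.
-/

open scoped Topology
open Asymptotics

theorem isCoboundedUnder_ge_of_countableInterFilter {α β : Type*} [LinearOrder β] [Nonempty β]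
    [(atTop : Filter β).IsCountablyGenerated] {l : Filter α} [l.NeBot] [CountableInterFilter l]
    (u : α → β) : IsCoboundedUnder (· ≥ ·) l u := by
  obtain ⟨b, hb⟩ := exists_seq_tendsto (atTop : Filter β)
  obtain ⟨n, hn⟩ : ∃ n, ∃ᶠ x in l, u x ≤ b n := by
    by_contra! hlt
    obtain ⟨x, hx⟩ := (eventually_countable_forall.2 hlt).exists
    obtain ⟨n, hn⟩ := (hb.eventually_ge_atTop (u x)).exists
    exact (hx n).not_ge hn
  exact .of_frequently_le hn

section PolynomialOrder

theorem exists_eventually_log_le_of_isBigO {α : Type*} {l : Filter α} {u v : α → ℝ}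
    (huv : u =O[l] v) (hu : ∀ᶠ x in l, u x ≠ 0) :
    ∃ C, ∀ᶠ x in l, log (u x) ≤ C + log (v x) := by
  obtain ⟨C, hC, hbound⟩ := huv.exists_pos
  refine ⟨log C, ?_⟩
  filter_upwards [hbound.bound, hu] with x hx hux
  have hvx : ‖v x‖ ≠ 0 := fun h ↦ hux (norm_le_zero_iff.1 (by simpa [h] using hx))
  calc log (u x) = log ‖u x‖ := (log_abs _).symm
    _ ≤ log (C * ‖v x‖) := log_le_log (norm_pos_iff.2 hux) hx
    _ = log C + log (v x) := by rw [log_mul hC.ne' hvx, norm_eq_abs, log_abs]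

variable {F : ℝ → ℝ} {a b : ℝ}

theorem eventually_log_div_log_lt_of_isBigO_rpow (hF : ∀ᶠ ρ in atTop, F ρ ≠ 0)
    (hFa : F =O[atTop] (· ^ a)) (hab : a < b) :
    ∀ᶠ ρ in atTop, log (F ρ) / log ρ < b := by
  obtain ⟨C, hC⟩ := exists_eventually_log_le_of_isBigO hFa hF
  have hlog := tendsto_log_atTop.const_mul_atTop (sub_pos.2 hab)
  filter_upwards [hC, hlog.eventually_gt_atTop C, eventually_gt_atTop 1] with ρ hle hlt hρ
  rw [log_rpow (by positivity)] at hle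
  rw [div_lt_iff₀ (log_pos hρ)]
  linarith

theorem eventually_lt_log_div_log_of_rpow_isBigO (hbF : (· ^ b) =O[atTop] F) (hab : a < b) :
    ∀ᶠ ρ in atTop, a < log (F ρ) / log ρ := by
  have hpow : ∀ᶠ ρ : ℝ in atTop, ρ ^ b ≠ 0 :=
    (eventually_gt_atTop 0).mono fun ρ hρ ↦ (rpow_pos_of_pos hρ b).ne'
  obtain ⟨C, hC⟩ := exists_eventually_log_le_of_isBigO hbF hpow
  have hlog := tendsto_log_atTop.const_mul_atTop (sub_pos.2 hab)
  filter_upwards [hC, hlog.eventually_gt_atTop C, eventually_gt_atTop 1] with ρ hle hlt hρ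
  rw [log_rpow (by positivity)] at hle
  rw [lt_div_iff₀ (log_pos hρ)]
  linarith

theorem tendsto_log_div_log_of_isBigO_rpow (hupper : ∀ b > a, F =O[atTop] (· ^ b))
    (hlower : ∀ b < a, (· ^ b) =O[atTop] F) :
    Tendsto (fun ρ ↦ log (F ρ) / log ρ) atTop (𝓝 a) := by
  have hF : ∀ᶠ ρ in atTop, F ρ ≠ 0 := by
    filter_upwards [(hlower (a - 1) (by linarith)).eq_zero_imp, eventually_gt_atTop 0]
      with ρ hzero hρ hFρ
    exact (rpow_pos_of_pos hρ _).ne' (hzero hFρ)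
  refine tendsto_order.2 ⟨fun b hb ↦ ?_, fun b hb ↦ ?_⟩
  · obtain ⟨b', hbb', hb'a⟩ := exists_between hb
    exact eventually_lt_log_div_log_of_rpow_isBigO (hlower b' hb'a) hbb'
  · obtain ⟨b', hab', hb'b⟩ := exists_between hb
    exact eventually_log_div_log_lt_of_isBigO_rpow hF (hupper b' hab') hb'b

end PolynomialOrder

section LaplacePrinciple

theorem rpow_neg_le_mul_rpow_neg {ρ₀ ρ a t : ℝ} (hρ₀ : 0 < ρ₀) (hρ : ρ₀ ≤ ρ) (hat : a ≤ t) :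
    ρ ^ (-t) ≤ (ρ / ρ₀) ^ (-a) * ρ₀ ^ (-t) := by
  have hratio : 1 ≤ ρ / ρ₀ := (one_le_div hρ₀).2 hρ
  calc ρ ^ (-t) = (ρ / ρ₀) ^ (-t) * ρ₀ ^ (-t) := by
        rw [← mul_rpow (by positivity) hρ₀.le, div_mul_cancel₀ _ hρ₀.ne']
    _ ≤ (ρ / ρ₀) ^ (-a) * ρ₀ ^ (-t) := by gcongr

variable {Ω : Type*} [MeasurableSpace Ω] {μ : Measure Ω} {f : Ω → ℝ} {ρ₀ ρ a : ℝ}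

theorem integrable_rpow_neg_of_le (hρ₀ : 0 < ρ₀) (hρ : ρ₀ ≤ ρ) (hf : AEMeasurable f μ)
    (hfa : ∀ᵐ x ∂μ, a ≤ f x) (hint : Integrable (fun x ↦ ρ₀ ^ (-f x)) μ) :
    Integrable (fun x ↦ ρ ^ (-f x)) μ := by
  refine (hint.const_mul ((ρ / ρ₀) ^ (-a))).mono' (hf.neg.const_pow ρ).aestronglyMeasurable ?_
  filter_upwards [hfa] with x hx
  rw [norm_of_nonneg (rpow_nonneg (hρ₀.le.trans hρ) _)]
  exact rpow_neg_le_mul_rpow_neg hρ₀ hρ hx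

theorem integral_rpow_neg_le (hρ₀ : 0 < ρ₀) (hρ : ρ₀ ≤ ρ) (hfa : ∀ᵐ x ∂μ, a ≤ f x)
    (hint : Integrable (fun x ↦ ρ₀ ^ (-f x)) μ) :
    ∫ x, ρ ^ (-f x) ∂μ ≤ (ρ / ρ₀) ^ (-a) * ∫ x, ρ₀ ^ (-f x) ∂μ := by
  rw [← integral_const_mul]
  refine integral_mono_of_nonneg (ae_of_all _ fun x ↦ rpow_nonneg (hρ₀.le.trans hρ) _)
    (hint.const_mul _) ?_
  filter_upwards [hfa] with x hx
  exact rpow_neg_le_mul_rpow_neg hρ₀ hρ hx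

theorem integral_rpow_neg_isBigO (hρ₀ : 0 < ρ₀) (hfa : ∀ᵐ x ∂μ, a ≤ f x)
    (hint : Integrable (fun x ↦ ρ₀ ^ (-f x)) μ) :
    (fun ρ ↦ ∫ x, ρ ^ (-f x) ∂μ) =O[atTop] fun ρ : ℝ ↦ ρ ^ (-a) := by
  refine .of_bound ((∫ x, ρ₀ ^ (-f x) ∂μ) / ρ₀ ^ (-a)) ?_
  filter_upwards [eventually_ge_atTop ρ₀] with ρ hρ
  have hρ_pos : 0 < ρ := hρ₀.trans_le hρ
  rw [norm_of_nonneg (integral_nonneg fun x ↦ by positivity), norm_of_nonneg (by positivity)]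
  calc ∫ x, ρ ^ (-f x) ∂μ ≤ (ρ / ρ₀) ^ (-a) * ∫ x, ρ₀ ^ (-f x) ∂μ :=
        integral_rpow_neg_le hρ₀ hρ hfa hint
    _ = (∫ x, ρ₀ ^ (-f x) ∂μ) / ρ₀ ^ (-a) * ρ ^ (-a) := by
        rw [div_rpow hρ_pos.le hρ₀.le]; ring

theorem measure_le_lt_top_of_integrable_rpow_neg (hρ : 1 < ρ)
    (hint : Integrable (fun x ↦ ρ ^ (-f x)) μ) (a : ℝ) : μ {x | f x ≤ a} < ⊤ := by
  have hfin := hint.measure_ge_lt_top (rpow_pos_of_pos (one_pos.trans hρ) (-a))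
  simpa only [rpow_le_rpow_left_iff hρ, neg_le_neg_iff] using hfin

theorem rpow_neg_mul_measureReal_le_integral (hρ : 1 < ρ)
    (hint : Integrable (fun x ↦ ρ ^ (-f x)) μ) (a : ℝ) :
    ρ ^ (-a) * μ.real {x | f x ≤ a} ≤ ∫ x, ρ ^ (-f x) ∂μ := by
  have hmarkov := mul_meas_ge_le_integral_of_nonneg
    (ae_of_all μ fun x ↦ rpow_nonneg (one_pos.trans hρ).le (-f x)) hint (ρ ^ (-a))
  simpa only [rpow_le_rpow_left_iff hρ, neg_le_neg_iff] using hmarkov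

theorem rpow_neg_isBigO_integral (hint : ∀ᶠ ρ : ℝ in atTop, Integrable (fun x ↦ ρ ^ (-f x)) μ)
    (hfa : ∃ᵐ x ∂μ, f x ≤ a) :
    (fun ρ : ℝ ↦ ρ ^ (-a)) =O[atTop] fun ρ ↦ ∫ x, ρ ^ (-f x) ∂μ := by
  obtain ⟨ρ₁, hint₁, hρ₁⟩ := (hint.and (eventually_gt_atTop 1)).exists
  have hpos : 0 < μ.real {x | f x ≤ a} :=
    ENNReal.toReal_pos (frequently_ae_iff.1 hfa)
      (measure_le_lt_top_of_integrable_rpow_neg hρ₁ hint₁ a).ne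
  refine .of_bound (μ.real {x | f x ≤ a})⁻¹ ?_
  filter_upwards [hint, eventually_gt_atTop 1] with ρ hintρ hρ
  rw [norm_of_nonneg (by positivity), norm_of_nonneg (integral_nonneg fun x ↦ by positivity),
    inv_mul_eq_div, le_div_iff₀ hpos]
  exact rpow_neg_mul_measureReal_le_integral hρ hintρ a

theorem tendsto_log_integral_rpow_neg_div_log [NeZero μ] (hρ₀ : 0 < ρ₀) (hf : AEMeasurable f μ)
    (hbdd : IsBoundedUnder (· ≥ ·) (ae μ) f) (hint : Integrable (fun x ↦ ρ₀ ^ (-f x)) μ) :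
    Tendsto (fun ρ ↦ log (∫ x, ρ ^ (-f x) ∂μ) / log ρ) atTop (𝓝 (-essInf f μ)) := by
  refine tendsto_log_div_log_of_isBigO_rpow (fun b hb ↦ ?_) (fun b hb ↦ ?_)
  · have hle : ∀ᵐ x ∂μ, -b ≤ f x :=
      (ae_lt_of_lt_essInf (neg_lt.1 hb) hbdd).mono fun _ hx ↦ hx.le
    simpa only [neg_neg] using integral_rpow_neg_isBigO hρ₀ hle hint
  · have hfreq : ∃ᵐ x ∂μ, f x ≤ -b :=
      (frequently_lt_of_liminf_lt (isCoboundedUnder_ge_of_countableInterFilter f)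
        (lt_neg.1 hb)).mono fun _ hx ↦ hx.le
    have hint_large : ∀ᶠ ρ in atTop, Integrable (fun x ↦ ρ ^ (-f x)) μ :=
      (eventually_ge_atTop ρ₀).mono fun ρ hρ ↦
        integrable_rpow_neg_of_le hρ₀ hρ hf (ae_essInf_le hbdd) hint
    simpa only [neg_neg] using rpow_neg_isBigO_integral hint_large hfreq

end LaplacePrinciple

section EssInf

variable {X β : Type*} [TopologicalSpace X] [MeasurableSpace X] {μ : Measure X}
  [μ.IsOpenPosMeasure] {s : Set X} {f : X → β}

theorem subset_closure_of_ae_restrict (hs : s ⊆ closure (interior s)) {p : X → Prop}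
    (hp : ∀ᵐ x ∂μ.restrict s, p x) : s ⊆ closure {x ∈ s | p x} := by
  refine fun x hx ↦ mem_closure_iff.2 fun U hU hxU ↦ ?_
  have hne : (U ∩ interior s).Nonempty := mem_closure_iff.1 (hs hx) U hU hxU
  have hfreq : ∃ᵐ y ∂μ, y ∈ U ∩ interior s :=
    frequently_ae_mem_iff.2 ((hU.inter isOpen_interior).measure_ne_zero μ hne)
  obtain ⟨y, ⟨hyU, hys⟩, hpy⟩ := (hfreq.and_eventually (ae_imp_of_ae_restrict hp)).exists
  exact ⟨y, hyU, interior_subset hys, hpy (interior_subset hys)⟩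

theorem forall_le_of_ae_restrict_le [Preorder β] [TopologicalSpace β] [ClosedIciTopology β]
    (hs : s ⊆ closure (interior s)) (hf : ContinuousOn f s) {a : β}
    (ha : ∀ᵐ x ∂μ.restrict s, a ≤ f x) : ∀ x ∈ s, a ≤ f x := by
  intro x hx
  have hmem : f x ∈ closure (Ici a) :=
    ((hf x hx).mono (sep_subset _ _)).mem_closure (subset_closure_of_ae_restrict hs ha hx)
      fun _ hy ↦ hy.2
  rwa [closure_Ici] at hmem

theorem essInf_restrict_eq_sInf_image [ConditionallyCompleteLattice β] [TopologicalSpace β]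
    [ClosedIciTopology β] (hs : s ⊆ closure (interior s)) (hs_meas : MeasurableSet s)
    (hs_ne : s.Nonempty) (hf : ContinuousOn f s) (hbdd : BddBelow (f '' s)) :
    essInf f (μ.restrict s) = sInf (f '' s) := by
  have hlower : {a | ∀ᵐ x ∂μ.restrict s, a ≤ f x} = lowerBounds (f '' s) := by
    ext a
    rw [mem_ofPred_eq, mem_lowerBounds, forall_mem_image]
    exact ⟨forall_le_of_ae_restrict_le hs hf, ae_restrict_of_forall_mem hs_meas⟩
  rw [essInf, liminf_eq, hlower, csSup_lowerBounds_eq_csInf hbdd (hs_ne.image f)]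

end EssInf

theorem stmt17_general {X : Type*} [TopologicalSpace X] [T2Space X] [MeasurableSpace X]
    [OpensMeasurableSpace X] {μ : Measure X} [μ.IsOpenPosMeasure] [IsFiniteMeasureOnCompacts μ]
    {K : Set X} (hK : IsCompact K) (hK_ne : K.Nonempty) (hK_int : K ⊆ closure (interior K))
    {f : X → ℝ} (hf : ContinuousOn f K) :
    Tendsto (fun ρ : ℝ ↦ log (∫ x in K, ρ ^ (-f x) ∂μ) / log ρ) atTop (𝓝 (-sInf (f '' K))) := by
  have hbdd : BddBelow (f '' K) := hK.bddBelow_image hf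
  have : NeZero (μ.restrict K) := by
    have hint : (interior K).Nonempty := closure_nonempty_iff.1 (hK_ne.mono hK_int)
    exact ⟨mt Measure.restrict_eq_zero.1 (μ.measure_pos_of_nonempty_interior hint).ne'⟩
  have hbdd_ae : IsBoundedUnder (· ≥ ·) (ae (μ.restrict K)) f := by
    obtain ⟨a, ha⟩ := hbdd
    exact isBoundedUnder_of_eventually_ge
      (ae_restrict_of_forall_mem hK.measurableSet fun x hx ↦ ha (mem_image_of_mem f hx))
  have hint : IntegrableOn (fun x ↦ (1 : ℝ) ^ (-f x)) K μ := by
    simpa only [one_rpow] using integrableOn_const hK.measure_lt_top.ne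
  rw [← essInf_restrict_eq_sInf_image (μ := μ) hK_int hK.measurableSet hK_ne hf hbdd]
  exact tendsto_log_integral_rpow_neg_div_log one_pos (hf.aemeasurable hK.measurableSet) hbdd_ae
    hint

/-- One-dimensional Laplace/Varadhan principle for SNR exponents: for continuous
`f : [0,c] → ℝ`, `lim_{ρ→∞} log(∫₀^c ρ^{-f(ν)} dν)/log ρ = -inf_{ν∈[0,c]} f(ν)`. -/
theorem stmt17 (c : ℝ) (hc : 0 < c) (f : ℝ → ℝ) (hf : ContinuousOn f (Set.Icc 0 c)) :
    Filter.Tendsto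
      (fun ρ : ℝ => Real.log (∫ ν in (0:ℝ)..c, ρ ^ (-(f ν))) / Real.log ρ)
      Filter.atTop (nhds (-sInf (f '' Set.Icc 0 c))) := by
  simp_rw [intervalIntegral.integral_of_le hc.le, ← integral_Icc_eq_integral_Ioc]
  exact stmt17_general isCompact_Icc (nonempty_Icc.2 hc.le) (closure_interior_Icc hc.ne).ge hf
end
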